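/- arXiv:2605.02097 — 2 statements merged into one kernel-verified Lean document; each statement's English description precedes it below -/
import Mathlib

section
/- Let Ψ be a normalized q-partite pure state on ℂ^{d₁}⊗⋯⊗ℂ^{d_q} (q ≥ 2, all dimensions finite and positive). Suppose that for every party r ∈ {1,…,q}, the (q−1)-partite reduced density matrix obtained from |Ψ⟩⟨Ψ| by tracing out the r-th factor is fully separable. Then Ψ is LU-equivalent to a generalized GHZ-state: there exist unitaries U_r on ℂ^{d_r}, a positive integer R ≤ min_r d_r, and complex coefficients λ₀,…,λ_{R−1} with Σ_j |λ_j|² = 1, such that (U₁⊗⋯⊗U_q)Ψ = Σ_{j=0}^{R−1} λ_j |j⟩^{⊗q}. -/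
open scoped BigOperators
open Matrix

noncomputable section

/-- The product vector with factors `u s`, over an arbitrary finite index type. -/
def prodVec {ι : Type} [Fintype ι] (dim : ι → ℕ) (u : ∀ s, Fin (dim s) → ℂ) :
    (∀ s, Fin (dim s)) → ℂ :=
  fun v => ∏ s, u s (v s)

/-- Full separability of a multipartite density matrix over a finite index type. -/
def FullySep {ι : Type} [Fintype ι] [DecidableEq ι] (dim : ι → ℕ)
    (ρ : Matrix (∀ s, Fin (dim s)) (∀ s, Fin (dim s)) ℂ) : Prop :=
  ∃ (m : ℕ) (p : Fin m → ℝ) (u : Fin m → ∀ s, Fin (dim s) → ℂ),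
    (∀ j, 0 ≤ p j) ∧ (∑ j, p j = 1) ∧
    (∀ j, ∑ v : ∀ s, Fin (dim s), ‖prodVec dim (u j) v‖ ^ 2 = 1) ∧
    ρ = ∑ j, (p j : ℂ) • Matrix.vecMulVec (prodVec dim (u j)) (star (prodVec dim (u j)))

/-- Insert the value `k` at position `r` into an assignment of indices to the other parties. -/
def ins (q : ℕ) (d : Fin q → ℕ) (r : Fin q) (k : Fin (d r))
    (j : ∀ s : {s : Fin q // s ≠ r}, Fin (d s.1)) : ∀ s, Fin (d s) :=
  fun s => if h : s = r then Fin.cast (congrArg d h.symm) k else j ⟨s, h⟩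

/-- The reduced density matrix of the pure state `Ψ` obtained by tracing out party `r`. -/
def reduced (q : ℕ) (d : Fin q → ℕ) (Ψ : (∀ r, Fin (d r)) → ℂ) (r : Fin q) :
    Matrix (∀ s : {s : Fin q // s ≠ r}, Fin (d s.1))
      (∀ s : {s : Fin q // s ≠ r}, Fin (d s.1)) ℂ :=
  fun j j' => ∑ k : Fin (d r), Ψ (ins q d r k j) * (starRingEnd ℂ) (Ψ (ins q d r k j'))

/-- The standard sesquilinear form on finitely supported coefficient functions. -/
def ip {α : Type} [Fintype α] (x y : α → ℂ) : ℂ := ∑ a, (starRingEnd ℂ) (x a) * y a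

lemma ip_eq_inner {α : Type} [Fintype α] (x y : α → ℂ) :
    ip x y = inner ℂ (WithLp.toLp 2 x : EuclideanSpace ℂ α) (WithLp.toLp 2 y) := by
  simp [ip, PiLp.inner_apply, mul_comm]

lemma ip_conj {α : Type} [Fintype α] (x y : α → ℂ) : (starRingEnd ℂ) (ip x y) = ip y x := by
  simp [ip, mul_comm]

lemma ip_self {α : Type} [Fintype α] (x : α → ℂ) : ip x x = ((∑ a, ‖x a‖ ^ 2 : ℝ) : ℂ) := by
  simp [ip, Complex.conj_mul']

lemma orthonormal_of_ip {α T : Type} [Fintype α] [DecidableEq T] (e : T → α → ℂ)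
    (he : ∀ i j, ip (e i) (e j) = if i = j then 1 else 0) :
    Orthonormal ℂ (fun t => (WithLp.toLp 2 (e t) : EuclideanSpace ℂ α)) := by
  rw [orthonormal_iff_ite]
  intro i j
  rw [← ip_eq_inner, he]

lemma bessel {α T : Type} [Fintype α] [Fintype T] [DecidableEq T] (e : T → α → ℂ)
    (he : ∀ i j, ip (e i) (e j) = if i = j then 1 else 0) (y : α → ℂ) (hy : ip y y = 1) :
    ∑ t, ‖ip (e t) y‖ ^ 2 ≤ 1 := by
  have h := (orthonormal_of_ip e he).sum_inner_products_le (s := Finset.univ) (WithLp.toLp 2 y)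
  simp only [← ip_eq_inner] at h
  refine h.trans ?_
  have h2 : ((‖(WithLp.toLp 2 y : EuclideanSpace ℂ α)‖ ^ 2 : ℝ) : ℂ) = 1 := by
    rw [← hy, ip_eq_inner, inner_self_eq_norm_sq_to_K]
    norm_cast
  exact le_of_eq (by exact_mod_cast h2)

lemma ip_norm_le_one {α : Type} [Fintype α] (x y : α → ℂ) (hx : ip x x = 1) (hy : ip y y = 1) :
    ‖ip x y‖ ^ 2 ≤ 1 := by
  have := bessel (fun _ : Unit => x) (by intro i j; simp [hx]) y hy
  simpa using this

lemma sum_pi_prod {ι : Type} [Fintype ι] [DecidableEq ι] (dim : ι → ℕ)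
    (f : ∀ s, Fin (dim s) → ℂ) :
    ∑ v : ∀ s, Fin (dim s), ∏ s, f s (v s) = ∏ s, ∑ x, f s x := by
  rw [Finset.prod_univ_sum]; simp

lemma ip_prodVec {ι : Type} [Fintype ι] [DecidableEq ι] (dim : ι → ℕ)
    (u w : ∀ s, Fin (dim s) → ℂ) :
    ip (prodVec dim u) (prodVec dim w) = ∏ s, ip (u s) (w s) := by
  unfold ip prodVec
  rw [← sum_pi_prod dim (fun s x => (starRingEnd ℂ) (u s x) * w s x)]
  simp [Finset.prod_mul_distrib]

/-- Extending an orthonormal family to a unitary matrix. -/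
lemma exists_unitary {R n : ℕ} (e : Fin R → Fin n → ℂ)
    (he : ∀ i j, ip (e i) (e j) = if i = j then 1 else 0) :
    R ≤ n ∧ ∃ U : Matrix (Fin n) (Fin n) ℂ, U * Uᴴ = 1 ∧ Uᴴ * U = 1 ∧
      ∀ (j : Fin R) (i : Fin n), (i : ℕ) = (j : ℕ) → ∀ x, U i x = (starRingEnd ℂ) (e j x) := by
  have ho := orthonormal_of_ip e he
  have hR : R ≤ n := by
    have := ho.linearIndependent.fintype_card_le_finrank
    simpa using this
  refine ⟨hR, ?_⟩
  let v : Fin n → EuclideanSpace ℂ (Fin n) := fun i =>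
    if h : (i : ℕ) < R then WithLp.toLp 2 (e ⟨i, h⟩) else 0
  let S : Set (Fin n) := {i | (i : ℕ) < R}
  have hv : Orthonormal ℂ (S.domRestrict v) := by
    rw [orthonormal_iff_ite]
    rintro ⟨i, hi⟩ ⟨j, hj⟩
    have hi' : (i : ℕ) < R := hi
    have hj' : (j : ℕ) < R := hj
    simp only [Set.domRestrict_apply, v, dif_pos hi', dif_pos hj', ← ip_eq_inner, he]
    simp [Fin.ext_iff]
  obtain ⟨b, hb⟩ := hv.exists_orthonormalBasis_extension_of_card_eq (by simp)
  let U : Matrix (Fin n) (Fin n) ℂ := fun i x => (starRingEnd ℂ) (b i x)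
  have hU : U * Uᴴ = 1 := by
    ext i j
    have := (orthonormal_iff_ite.mp b.orthonormal) i j
    have hUa : ∀ i x, U i x = (starRingEnd ℂ) (b i x) := fun _ _ => rfl
    rw [Matrix.one_apply, ← this, Matrix.mul_apply]
    simp [hUa, PiLp.inner_apply, mul_comm]
  refine ⟨U, hU, mul_eq_one_comm.mp hU, ?_⟩
  intro j i hij x
  have hi : (i : ℕ) < R := by rw [hij]; exact j.2
  have h1 := hb i hi
  simp only [U, h1, v, dif_pos hi]
  congr 3

lemma kron_norm {q : ℕ} (d : Fin q → ℕ) (U : ∀ r, Matrix (Fin (d r)) (Fin (d r)) ℂ)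
    (hU : ∀ r, (U r)ᴴ * U r = 1) (Ψ : (∀ r, Fin (d r)) → ℂ) :
    ∑ v : ∀ r, Fin (d r), ‖∑ w : ∀ r, Fin (d r), (∏ r, U r (v r) (w r)) * Ψ w‖ ^ 2
      = ∑ v : ∀ r, Fin (d r), ‖Ψ v‖ ^ 2 := by
  let K : Matrix (∀ r, Fin (d r)) (∀ r, Fin (d r)) ℂ := fun v w => ∏ r, U r (v r) (w r)
  have hK : Kᴴ * K = 1 := by
    ext w w'
    have h1 : (Kᴴ * K) w w' = ∏ r, ((U r)ᴴ * U r) (w r) (w' r) := by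
      have hKa : ∀ v w, K v w = ∏ r, U r (v r) (w r) := fun _ _ => rfl
      simp only [Matrix.mul_apply, Matrix.conjTranspose_apply, hKa]
      rw [← sum_pi_prod d (fun r x => star (U r x (w r)) * U r x (w' r))]
      simp [Finset.prod_mul_distrib]
    rw [h1]
    simp only [hU, Matrix.one_apply]
    by_cases h : w = w'
    · simp [h]
    · rw [if_neg h]
      obtain ⟨r, hr⟩ := Function.ne_iff.mp h
      exact Finset.prod_eq_zero (Finset.mem_univ r) (by simp [hr])
  have key : star (K *ᵥ Ψ) ⬝ᵥ (K *ᵥ Ψ) = star Ψ ⬝ᵥ Ψ := by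
    rw [Matrix.star_mulVec, ← Matrix.dotProduct_mulVec, Matrix.mulVec_mulVec, hK, Matrix.one_mulVec]
  have h2 : ∀ f : (∀ r, Fin (d r)) → ℂ, star f ⬝ᵥ f = ((∑ v, ‖f v‖ ^ 2 : ℝ) : ℂ) := by
    intro f
    rw [← ip_self]; rfl
  rw [h2, h2] at key
  exact_mod_cast key

lemma core2 {q : ℕ} (d : Fin q → ℕ) (hq : 2 ≤ q)
    (Ψ : (∀ r, Fin (d r)) → ℂ)
    (hΨ : ∑ v : ∀ r, Fin (d r), ‖Ψ v‖ ^ 2 = 1) (R : ℕ)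
    (e : Fin R → ∀ s, Fin (d s) → ℂ)
    (he : ∀ s i j, ip (e i s) (e j s) = if i = j then 1 else 0)
    (lam : Fin R → ℂ) (hl : ∑ j, ‖lam j‖ ^ 2 = 1)
    (hlam : ∀ j, ip (prodVec d (e j)) Ψ = lam j) :
    ∃ (U : ∀ r, Matrix (Fin (d r)) (Fin (d r)) ℂ) (R : ℕ) (lam : Fin R → ℂ),
      0 < R ∧ (∀ r, R ≤ d r) ∧
      (∀ r, U r * (U r)ᴴ = 1) ∧ (∀ r, (U r)ᴴ * U r = 1) ∧
      (∑ j, ‖lam j‖ ^ 2 = 1) ∧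
      ∀ v : ∀ r, Fin (d r),
        (∑ w : ∀ r, Fin (d r), (∏ r, U r (v r) (w r)) * Ψ w)
          = ∑ j : Fin R, if ∀ r, (v r : ℕ) = (j : ℕ) then lam j else 0 := by
  have h := fun s => exists_unitary (fun j => e j s) (he s)
  choose hR U hU1 hU2 hU3 using h
  have hR0 : 0 < R := by
    rcases Nat.eq_zero_or_pos R with h | h
    · subst h; simp at hl
    · exact h
  refine ⟨U, R, lam, hR0, hR, hU1, hU2, hl, ?_⟩
  let Φ : (∀ r, Fin (d r)) → ℂ := fun v => ∑ w : ∀ r, Fin (d r), (∏ r, U r (v r) (w r)) * Ψ w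
  have hN : ∑ v, ‖Φ v‖ ^ 2 = 1 := (kron_norm d U hU2 Ψ).trans hΨ
  let D : Fin R → ∀ r, Fin (d r) := fun j r => ⟨j, j.2.trans_le (hR r)⟩
  have hD : Function.Injective D := by
    intro i j hij
    have := congrFun hij ⟨0, by omega⟩
    simp only [D, Fin.mk.injEq] at this
    exact Fin.ext this
  have hΦD : ∀ j, Φ (D j) = lam j := by
    intro j
    rw [← hlam]
    simp only [Φ, ip, prodVec, map_prod]
    refine Finset.sum_congr rfl fun w _ => ?_
    congr 1
    refine Finset.prod_congr rfl fun r _ => ?_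
    exact hU3 r j _ rfl _
  have hrest : ∀ v, v ∉ Finset.univ.image D → Φ v = 0 := by
    have h1 := Finset.sum_add_sum_compl (Finset.univ.image D) (fun v => ‖Φ v‖ ^ 2)
    rw [hN, Finset.sum_image (fun i _ j _ h => hD h)] at h1
    simp only [hΦD, hl] at h1
    have h2 : ∑ v ∈ (Finset.univ.image D)ᶜ, ‖Φ v‖ ^ 2 = 0 := by linarith
    rw [Finset.sum_eq_zero_iff_of_nonneg (fun _ _ => by positivity)] at h2
    intro v hv
    have := h2 v (by simpa using hv)
    simpa using this
  intro v
  change Φ v = _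
  by_cases hv : v ∈ Finset.univ.image D
  · obtain ⟨j, -, rfl⟩ := Finset.mem_image.mp hv
    rw [hΦD, Finset.sum_eq_single j]
    · simp [D]
    · intro b _ hb
      rw [if_neg]
      intro h
      exact hb (Fin.ext (h ⟨0, by omega⟩).symm)
    · simp
  · rw [hrest v hv, eq_comm]
    refine Finset.sum_eq_zero fun j _ => ?_
    rw [if_neg]
    intro h
    apply hv
    exact Finset.mem_image.mpr ⟨j, Finset.mem_univ _, funext fun r => Fin.ext (h r).symm⟩

lemma ins_self (q : ℕ) (d : Fin q → ℕ) (r : Fin q) (k : Fin (d r))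
    (j : ∀ s : {s : Fin q // s ≠ r}, Fin (d s.1)) : ins q d r k j r = k := by
  simp [ins]

lemma ins_ne (q : ℕ) (d : Fin q → ℕ) (r : Fin q) (k : Fin (d r))
    (j : ∀ s : {s : Fin q // s ≠ r}, Fin (d s.1)) (s : Fin q) (h : s ≠ r) :
    ins q d r k j s = j ⟨s, h⟩ := by
  simp [ins, h]

lemma sum_ins (q : ℕ) (d : Fin q → ℕ) (r : Fin q) {M : Type} [AddCommMonoid M]
    (f : (∀ s, Fin (d s)) → M) :
    ∑ v, f v = ∑ k, ∑ j, f (ins q d r k j) := by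
  rw [← (Equiv.piSplitAt r (fun s => Fin (d s))).symm.sum_comp, Fintype.sum_prod_type]
  refine Finset.sum_congr rfl fun k _ => Finset.sum_congr rfl fun j _ => ?_
  congr 1
  funext s
  by_cases h : s = r
  · subst h; simp [ins, Equiv.piSplitAt]
  · simp [ins, Equiv.piSplitAt, h]

lemma update_ins_self (q : ℕ) (d : Fin q → ℕ) (r : Fin q) (k k' : Fin (d r))
    (j : ∀ s : {s : Fin q // s ≠ r}, Fin (d s.1)) :
    Function.update (ins q d r k j) r k' = ins q d r k' j := by
  funext s
  by_cases h : s = r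
  · subst h; simp [ins_self]
  · simp [ins_ne _ _ _ _ _ _ h, h]

lemma update_ins_ne (q : ℕ) (d : Fin q → ℕ) (r : Fin q) (k : Fin (d r))
    (j : ∀ s : {s : Fin q // s ≠ r}, Fin (d s.1)) (s : Fin q) (h : s ≠ r) (b : Fin (d s)) :
    Function.update (ins q d r k j) s b = ins q d r k (Function.update j ⟨s, h⟩ b) := by
  funext t
  by_cases ht : t = r
  · subst ht; rw [Function.update_of_ne h.symm]; simp [ins_self]
  · rw [ins_ne _ _ _ _ _ _ ht]
    by_cases hs : t = s
    · subst hs; simp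
    · rw [Function.update_of_ne hs, Function.update_of_ne (by simpa using hs), ins_ne _ _ _ _ _ _ ht]

lemma prodVec_ins (q : ℕ) (d : Fin q → ℕ) (r : Fin q) (k : Fin (d r))
    (j : ∀ s : {s : Fin q // s ≠ r}, Fin (d s.1)) (e : ∀ s, Fin (d s) → ℂ) :
    prodVec d e (ins q d r k j) =
      e r k * prodVec (fun s : {s : Fin q // s ≠ r} => d s.1) (fun s => e s.1) j := by
  unfold prodVec
  rw [Fintype.prod_eq_mul_prod_subtype_ne _ r, ins_self]
  congr 1
  refine Finset.prod_congr rfl fun s _ => ?_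
  rw [ins_ne _ _ _ _ _ _ s.2]

lemma core1 {q : ℕ} (d : Fin q → ℕ) (hq : 2 ≤ q)
    (Ψ : (∀ r, Fin (d r)) → ℂ)
    (hΨ : ∑ v : ∀ r, Fin (d r), ‖Ψ v‖ ^ 2 = 1) (r : Fin q) (T : Type) [Fintype T] [DecidableEq T]
    (u : T → ∀ s : {s : Fin q // s ≠ r}, Fin (d s.1) → ℂ)
    (hu : ∀ s t t', ip (u t s) (u t' s) = if t = t' then 1 else 0)
    (p : T → ℝ) (hp : ∀ t, 0 < p t) (hp1 : ∑ t, p t = 1)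
    (hρ : ∀ t t', ip (prodVec (fun s : {s : Fin q // s ≠ r} => d s.1) (u t))
      (reduced q d Ψ r *ᵥ prodVec (fun s : {s : Fin q // s ≠ r} => d s.1) (u t')) =
        if t = t' then (p t : ℂ) else 0) :
    ∃ (U : ∀ r, Matrix (Fin (d r)) (Fin (d r)) ℂ) (R : ℕ) (lam : Fin R → ℂ),
      0 < R ∧ (∀ r, R ≤ d r) ∧
      (∀ r, U r * (U r)ᴴ = 1) ∧ (∀ r, (U r)ᴴ * U r = 1) ∧
      (∑ j, ‖lam j‖ ^ 2 = 1) ∧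
      ∀ v : ∀ r, Fin (d r),
        (∑ w : ∀ r, Fin (d r), (∏ r, U r (v r) (w r)) * Ψ w)
          = ∑ j : Fin R, if ∀ r, (v r : ℕ) = (j : ℕ) then lam j else 0 := by
  let G : T → Fin (d r) → ℂ := fun t k =>
    ip (prodVec (fun s : {s : Fin q // s ≠ r} => d s.1) (u t)) (fun j => Ψ (ins q d r k j))
  let g : T → Fin (d r) → ℂ := fun t k => ((Real.sqrt (p t) : ℝ) : ℂ)⁻¹ * G t k
  have hsq : ∀ t, ((Real.sqrt (p t) : ℝ) : ℂ) ≠ 0 := fun t => by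
    exact_mod_cast (Real.sqrt_pos.mpr (hp t)).ne'
  have hsq2 : ∀ t, ((Real.sqrt (p t) : ℝ) : ℂ) * ((Real.sqrt (p t) : ℝ) : ℂ) = p t := fun t => by
    exact_mod_cast Real.mul_self_sqrt (hp t).le
  have hG : ∀ t t', ip (G t) (G t') = if t = t' then (p t : ℂ) else 0 := by
    intro t t'
    have h1 := hρ t' t
    have h2 : (if t = t' then (p t : ℂ) else 0) = if t' = t then (p t' : ℂ) else 0 := by
      by_cases h : t = t'
      · simp [h]
      · simp [h, Ne.symm h]
    rw [h2, ← h1]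
    simp only [G, ip, Matrix.mulVec, dotProduct, reduced, map_sum, map_mul, Complex.conj_conj,
      Finset.sum_mul, Finset.mul_sum]
    rw [Finset.sum_comm]
    refine Finset.sum_congr rfl fun x _ => ?_
    rw [Finset.sum_comm]
    refine Finset.sum_congr rfl fun y _ => Finset.sum_congr rfl fun k _ => ?_
    ring
  have hg : ∀ t t', ip (g t) (g t') = if t = t' then 1 else 0 := by
    intro t t'
    have h1 : ip (g t) (g t') = ((Real.sqrt (p t) : ℝ) : ℂ)⁻¹ * ((Real.sqrt (p t') : ℝ) : ℂ)⁻¹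
        * ip (G t) (G t') := by
      simp only [ip, g, Finset.mul_sum, map_mul, map_inv₀, Complex.conj_ofReal]
      exact Finset.sum_congr rfl fun _ _ => by ring
    rw [h1, hG]
    by_cases h : t = t'
    · subst h
      simp only [if_true]
      rw [← hsq2]
      have := hsq t
      field_simp
    · simp [h]
  let E : T → ∀ s, Fin (d s) → ℂ := fun t s =>
    if h : s = r then fun x => g t (Fin.cast (congrArg d h) x) else u t ⟨s, h⟩
  have hEr : ∀ t, E t r = g t := by intro t; simp [E]
  have hEs : ∀ t (s : {s : Fin q // s ≠ r}), E t s.1 = u t s := by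
    intro t s; simp [E, s.2]
  have hE : ∀ s t t', ip (E t s) (E t' s) = if t = t' then 1 else 0 := by
    intro s t t'
    by_cases h : s = r
    · subst h; rw [hEr, hEr, hg]
    · rw [hEs t ⟨s, h⟩, hEs t' ⟨s, h⟩, hu]
  have hL : ∀ t, ip (prodVec d (E t)) Ψ = ((Real.sqrt (p t) : ℝ) : ℂ) := by
    intro t
    have h1 : ip (prodVec d (E t)) Ψ = ip (g t) (G t) := by
      conv_lhs => unfold ip
      rw [sum_ins q d r]
      simp only [prodVec_ins, hEr, hEs]
      simp only [ip, G, Finset.mul_sum, map_mul, mul_assoc]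
    have h2 : G t = fun k => ((Real.sqrt (p t) : ℝ) : ℂ) * g t k := by
      funext k
      simp only [g]
      rw [mul_inv_cancel_left₀ (hsq t)]
    have h3 : ip (g t) (G t) = ((Real.sqrt (p t) : ℝ) : ℂ) * ip (g t) (g t) := by
      rw [h2]
      simp only [ip, Finset.mul_sum]
      exact Finset.sum_congr rfl fun _ _ => by ring
    rw [h1, h3, hg]; simp
  let eq := Fintype.equivFin T
  refine core2 d hq Ψ hΨ (Fintype.card T) (fun j => E (eq.symm j)) ?_
    (fun j => ((Real.sqrt (p (eq.symm j)) : ℝ) : ℂ)) ?_ ?_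
  · intro s i j
    rw [hE]; simp
  · rw [eq.symm.sum_comp (fun t => ‖((Real.sqrt (p t) : ℝ) : ℂ)‖ ^ 2), ← hp1]
    refine Finset.sum_congr rfl fun t _ => ?_
    rw [Complex.norm_real, Real.norm_eq_abs, sq_abs, Real.sq_sqrt (hp t).le]
  · intro j
    exact hL _

open ComplexOrder in
lemma spectral {α : Type} [Fintype α] [DecidableEq α] (A : Matrix α α ℂ) (hA : A.PosSemidef)
    (htr : A.trace = 1) : ∃ (S : Finset α) (b : S → α → ℂ) (p : S → ℝ),
      (∀ t t', ip (b t) (b t') = if t = t' then 1 else 0) ∧ (∀ t, 0 < p t) ∧ ∑ t, p t = 1 ∧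
      ∀ t t', ip (b t) (A *ᵥ b t') = if t = t' then (p t : ℂ) else 0 := by
  have hH := hA.1
  have horth : ∀ i j, ip (hH.eigenvectorBasis i).ofLp (hH.eigenvectorBasis j).ofLp =
      if i = j then 1 else 0 := by
    intro i j
    rw [ip_eq_inner]
    exact (orthonormal_iff_ite.mp hH.eigenvectorBasis.orthonormal) i j
  refine ⟨Finset.univ.filter (fun i => 0 < hH.eigenvalues i),
    fun t => (hH.eigenvectorBasis t.1).ofLp, fun t => hH.eigenvalues t.1, ?_, ?_, ?_, ?_⟩
  · intro t t'
    rw [horth]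
    exact if_congr Subtype.ext_iff.symm rfl rfl
  · intro t
    exact (Finset.mem_filter.mp t.2).2
  · have h1 := hH.trace_eq_sum_eigenvalues
    rw [htr] at h1
    have h2 : ∑ i, hH.eigenvalues i = 1 := by
      apply Complex.ofReal_injective
      push_cast
      exact h1.symm
    rw [Finset.sum_coe_sort (Finset.univ.filter (fun i => 0 < hH.eigenvalues i)) hH.eigenvalues,
      ← h2]
    refine Finset.sum_subset (Finset.filter_subset _ _) fun i _ hi => ?_
    have h3 := hA.eigenvalues_nonneg i
    simp only [Finset.mem_filter, Finset.mem_univ, true_and, not_lt] at hi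
    exact le_antisymm hi h3
  · intro t t'
    rw [hH.mulVec_eigenvectorBasis]
    have h1 : ∀ (x y : α → ℂ) (c : ℝ), ip x (c • y) = c * ip x y := by
      intro x y c
      simp only [ip, Finset.mul_sum, Pi.smul_apply, Complex.real_smul]
      exact Finset.sum_congr rfl fun _ _ => by ring
    rw [h1, horth]
    by_cases h : t = t'
    · simp [h]
    · have : ¬ (t.1 = t'.1) := fun h' => h (Subtype.ext h')
      simp [h, this]

open ComplexOrder in
lemma reduced_posSemidef (q : ℕ) (d : Fin q → ℕ) (Ψ : (∀ r, Fin (d r)) → ℂ) (r : Fin q) :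
    (reduced q d Ψ r).PosSemidef := by
  let M : Matrix (∀ s : {s : Fin q // s ≠ r}, Fin (d s.1)) (Fin (d r)) ℂ :=
    fun j k => Ψ (ins q d r k j)
  have : reduced q d Ψ r = M * Mᴴ := by
    ext i j
    rw [Matrix.mul_apply]; rfl
  rw [this]
  exact Matrix.posSemidef_self_mul_conjTranspose M

lemma reduced_trace (q : ℕ) (d : Fin q → ℕ) (Ψ : (∀ r, Fin (d r)) → ℂ)
    (hΨ : ∑ v : ∀ r, Fin (d r), ‖Ψ v‖ ^ 2 = 1) (r : Fin q) :
    (reduced q d Ψ r).trace = 1 := by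
  have h : ((∑ v : ∀ r, Fin (d r), ‖Ψ v‖ ^ 2 : ℝ) : ℂ) = 1 := by rw [hΨ]; simp
  rw [← h, sum_ins q d r, Finset.sum_comm]
  simp [Matrix.trace, reduced, Complex.mul_conj']

lemma case_two {q : ℕ} (d : Fin q → ℕ) (hq : 2 ≤ q)
    (Ψ : (∀ r, Fin (d r)) → ℂ)
    (hΨ : ∑ v : ∀ r, Fin (d r), ‖Ψ v‖ ^ 2 = 1) (r : Fin q) [Unique {s : Fin q // s ≠ r}] :
    ∃ (U : ∀ r, Matrix (Fin (d r)) (Fin (d r)) ℂ) (R : ℕ) (lam : Fin R → ℂ),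
      0 < R ∧ (∀ r, R ≤ d r) ∧
      (∀ r, U r * (U r)ᴴ = 1) ∧ (∀ r, (U r)ᴴ * U r = 1) ∧
      (∑ j, ‖lam j‖ ^ 2 = 1) ∧
      ∀ v : ∀ r, Fin (d r),
        (∑ w : ∀ r, Fin (d r), (∏ r, U r (v r) (w r)) * Ψ w)
          = ∑ j : Fin R, if ∀ r, (v r : ℕ) = (j : ℕ) then lam j else 0 := by
  obtain ⟨S, b, p, hb, hp, hp1, hρ⟩ :=
    spectral _ (reduced_posSemidef q d Ψ r) (reduced_trace q d Ψ hΨ r)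
  let E := Equiv.piUnique (fun s : {s : Fin q // s ≠ r} => Fin (d s.1))
  let u : S → ∀ s : {s : Fin q // s ≠ r}, Fin (d s.1) → ℂ := fun t =>
    uniqueElim (fun x => b t (E.symm x))
  have hud : ∀ t, u t default = fun x => b t (E.symm x) := by
    intro t; simp only [u, uniqueElim_default]
  have hpv : ∀ t, prodVec (fun s : {s : Fin q // s ≠ r} => d s.1) (u t) = b t := by
    intro t
    funext v
    rw [prodVec, Fintype.prod_unique, hud]
    exact congrArg (b t) (E.symm_apply_apply v)
  refine core1 d hq Ψ hΨ r S u ?_ p hp hp1 ?_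
  · rw [Unique.forall_iff]
    intro t t'
    rw [hud, hud, ← hb t t']
    exact E.symm.sum_comp (fun a => (starRingEnd ℂ) (b t a) * b t' a)
  · intro t t'
    rw [hpv, hpv, hρ]

lemma fullySep_normalized {ι : Type} [Fintype ι] [DecidableEq ι] (dim : ι → ℕ)
    (ρ : Matrix (∀ s, Fin (dim s)) (∀ s, Fin (dim s)) ℂ) (h : FullySep dim ρ) :
    ∃ (m : ℕ) (p : Fin m → ℝ) (u : Fin m → ∀ s, Fin (dim s) → ℂ),
    (∀ j, 0 ≤ p j) ∧ (∑ j, p j = 1) ∧ (∀ j s, ip (u j s) (u j s) = 1) ∧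
    ∀ v w, ρ v w = ∑ j, (p j : ℂ) * (prodVec dim (u j) v *
      (starRingEnd ℂ) (prodVec dim (u j) w)) := by
  obtain ⟨m, p, u, hp, hp1, hu, hρ⟩ := h
  let N : Fin m → ι → ℝ := fun j s => ∑ a, ‖u j s a‖ ^ 2
  have hN : ∀ j, ∏ s, N j s = 1 := by
    intro j
    have h1 := ip_prodVec dim (u j) (u j)
    rw [ip_self, hu j] at h1
    simp only [ip_self] at h1
    exact_mod_cast h1.symm
  have hN0 : ∀ j s, 0 < N j s := by
    intro j s
    refine lt_of_le_of_ne (Finset.sum_nonneg fun _ _ => by positivity) fun h => ?_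
    have := hN j
    rw [Finset.prod_eq_zero (Finset.mem_univ s) h.symm] at this
    exact zero_ne_one this
  let u' : Fin m → ∀ s, Fin (dim s) → ℂ := fun j s a => ((Real.sqrt (N j s) : ℝ) : ℂ)⁻¹ * u j s a
  have hu' : ∀ j, prodVec dim (u' j) = prodVec dim (u j) := by
    intro j
    funext v
    simp only [prodVec, u', Finset.prod_mul_distrib, Finset.prod_inv_distrib]
    have h1 : ∏ s, ((Real.sqrt (N j s) : ℝ) : ℂ) = 1 := by
      have : ∏ s, Real.sqrt (N j s) = 1 := by
        rw [← Real.sqrt_prod _ (fun s _ => (hN0 j s).le), hN, Real.sqrt_one]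
      exact_mod_cast this
    rw [h1]; simp
  refine ⟨m, p, u', hp, hp1, ?_, ?_⟩
  · intro j s
    rw [ip_self]
    have : ∑ a, ‖u' j s a‖ ^ 2 = 1 := by
      have h0 := hN0 j s
      simp only [u', norm_mul, norm_inv, Complex.norm_real, Real.norm_eq_abs, mul_pow, inv_pow,
        sq_abs, Real.sq_sqrt h0.le, ← Finset.mul_sum]
      exact inv_mul_cancel₀ h0.ne'
    rw [this]; simp
  · intro v w
    simp only [hu']
    rw [hρ, Matrix.sum_apply]
    simp [Matrix.vecMulVec_apply]

/-- Replace the coordinates of `v` selected by `S` with those of `w`. -/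
def mix {ι : Type} (dim : ι → ℕ) (S : ι → Prop) [DecidablePred S]
    (v w : ∀ s, Fin (dim s)) : ∀ s, Fin (dim s) := fun t => if S t then w t else v t

lemma sum_pi_prod2 {ι : Type} [Fintype ι] [DecidableEq ι] (dim : ι → ℕ)
    (F : ∀ s, Fin (dim s) → Fin (dim s) → ℂ) :
    ∑ v : ∀ s, Fin (dim s), ∑ w : ∀ s, Fin (dim s), ∏ s, F s (v s) (w s) =
      ∏ s, ∑ x, ∑ y, F s x y := by
  rw [← sum_pi_prod dim (fun s x => ∑ y, F s x y)]
  refine Finset.sum_congr rfl fun v _ => ?_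
  rw [← sum_pi_prod dim (fun s y => F s (v s) y)]

lemma sep_purity {ι : Type} [Fintype ι] [DecidableEq ι] (dim : ι → ℕ)
    (ρ : Matrix (∀ s, Fin (dim s)) (∀ s, Fin (dim s)) ℂ)
    (m : ℕ) (p : Fin m → ℝ) (u : Fin m → ∀ s, Fin (dim s) → ℂ)
    (hu : ∀ j s, ip (u j s) (u j s) = 1)
    (hρ : ∀ v w, ρ v w = ∑ j, (p j : ℂ) * (prodVec dim (u j) v *
      (starRingEnd ℂ) (prodVec dim (u j) w)))
    (S : ι → Prop) [DecidablePred S] :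
    ∑ v, ∑ w, ρ v (mix dim S v w) * ρ w (mix dim S w v) =
      ((∑ i, ∑ j, p i * p j * ∏ t, (if S t then ‖ip (u i t) (u j t)‖ ^ 2 else 1) : ℝ) : ℂ) := by
  have hF : ∀ i j, ∑ v : ∀ s, Fin (dim s), ∑ w : ∀ s, Fin (dim s),
      (prodVec dim (u i) v * (starRingEnd ℂ) (prodVec dim (u i) (mix dim S v w))) *
      (prodVec dim (u j) w * (starRingEnd ℂ) (prodVec dim (u j) (mix dim S w v))) =
      ((∏ t, (if S t then ‖ip (u i t) (u j t)‖ ^ 2 else 1) : ℝ) : ℂ) := by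
    intro i j
    have h1 := sum_pi_prod2 dim (fun t x y =>
      (u i t x * (starRingEnd ℂ) (u i t (if S t then y else x))) *
      (u j t y * (starRingEnd ℂ) (u j t (if S t then x else y))))
    simp only [prodVec, mix, map_prod, ← Finset.prod_mul_distrib]
    rw [h1]
    push_cast
    refine Finset.prod_congr rfl fun t _ => ?_
    by_cases hS : S t
    · simp only [hS, if_true]
      push_cast
      rw [← Complex.mul_conj', ip_conj]
      simp only [ip, Finset.sum_mul_sum]
      rw [Finset.sum_comm]
      exact Finset.sum_congr rfl fun x _ => Finset.sum_congr rfl fun y _ => by ring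
    · simp only [hS, if_false]
      have h2 := congrArg₂ (· * ·) (hu i t) (hu j t)
      simp only [ip, Finset.sum_mul_sum, mul_one] at h2
      push_cast
      rw [← h2]
      exact Finset.sum_congr rfl fun x _ => Finset.sum_congr rfl fun y _ => by ring
  push_cast
  have h3 : ∀ i j, (p i : ℂ) * (p j : ℂ) *
      ∏ t, ((if S t then ‖ip (u i t) (u j t)‖ ^ 2 else 1 : ℝ) : ℂ) =
      ∑ v : ∀ s, Fin (dim s), ∑ w : ∀ s, Fin (dim s), (p i : ℂ) * (p j : ℂ) *
      ((prodVec dim (u i) v * (starRingEnd ℂ) (prodVec dim (u i) (mix dim S v w))) *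
      (prodVec dim (u j) w * (starRingEnd ℂ) (prodVec dim (u j) (mix dim S w v)))) := by
    intro i j
    simp only [← Finset.mul_sum]
    rw [hF]
    push_cast
    rfl
  simp only [h3, hρ, Finset.sum_mul_sum]
  have e1 : ∀ f : Fin m → Fin m → (∀ s, Fin (dim s)) → (∀ s, Fin (dim s)) → ℂ,
      ∑ i, ∑ j, ∑ v, ∑ w, f i j v w = ∑ v, ∑ w, ∑ i, ∑ j, f i j v w := by
    intro f
    calc ∑ i, ∑ j, ∑ v, ∑ w, f i j v w = ∑ i, ∑ v, ∑ j, ∑ w, f i j v w :=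
          Finset.sum_congr rfl fun i _ => Finset.sum_comm
      _ = ∑ v, ∑ i, ∑ j, ∑ w, f i j v w := Finset.sum_comm
      _ = ∑ v, ∑ i, ∑ w, ∑ j, f i j v w :=
          Finset.sum_congr rfl fun v _ => Finset.sum_congr rfl fun i _ => Finset.sum_comm
      _ = _ := Finset.sum_congr rfl fun v _ => Finset.sum_comm
  rw [e1]
  exact Finset.sum_congr rfl fun v _ => Finset.sum_congr rfl fun w _ =>
    Finset.sum_congr rfl fun i _ => Finset.sum_congr rfl fun j _ => by ring

/-- The purity of the one-party marginal on party `s`. -/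
def pur (q : ℕ) (d : Fin q → ℕ) (Ψ : (∀ r, Fin (d r)) → ℂ) (s : Fin q) : ℂ :=
  ∑ v : ∀ r, Fin (d r), ∑ w : ∀ r, Fin (d r),
    (Ψ v * (starRingEnd ℂ) (Ψ (Function.update v s (w s)))) *
    (Ψ w * (starRingEnd ℂ) (Ψ (Function.update w s (v s))))

lemma pur_self (q : ℕ) (d : Fin q → ℕ) (Ψ : (∀ r, Fin (d r)) → ℂ) (r : Fin q) :
    pur q d Ψ r = ∑ v, ∑ w, reduced q d Ψ r v w * reduced q d Ψ r w v := by
  unfold pur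
  rw [sum_ins q d r]
  simp only [sum_ins q d r (fun w => _ * (Ψ w * _)), ins_self, update_ins_self]
  rw [Finset.sum_comm]
  refine Finset.sum_congr rfl fun v _ => ?_
  simp only [reduced, Finset.sum_mul_sum]
  rw [Finset.sum_congr rfl fun k _ => Finset.sum_comm, Finset.sum_comm]
  exact Finset.sum_congr rfl fun w _ => Finset.sum_congr rfl fun k _ =>
    Finset.sum_congr rfl fun k' _ => by ring

lemma pur_other (q : ℕ) (d : Fin q → ℕ) (Ψ : (∀ r, Fin (d r)) → ℂ) (r s : Fin q) (h : s ≠ r) :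
    pur q d Ψ s = ∑ v, ∑ w,
      reduced q d Ψ r v (Function.update v ⟨s, h⟩ (w ⟨s, h⟩)) *
      reduced q d Ψ r w (Function.update w ⟨s, h⟩ (v ⟨s, h⟩)) := by
  unfold pur
  rw [sum_ins q d r]
  simp only [sum_ins q d r (fun w => _ * (Ψ w * _)), ins_ne _ _ _ _ _ _ h,
    update_ins_ne _ _ _ _ _ _ h]
  rw [Finset.sum_comm]
  refine Finset.sum_congr rfl fun v _ => ?_
  simp only [reduced, Finset.sum_mul_sum]
  rw [Finset.sum_congr rfl fun k _ => Finset.sum_comm, Finset.sum_comm]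

lemma exists_rep {A : Type} [DecidableEq A] (rel : A → A → Prop)
    (hs : ∀ i j, rel i j → rel j i) (J : Finset A) (hr : ∀ i ∈ J, rel i i) :
    ∃ T ⊆ J, (∀ i ∈ T, ∀ j ∈ T, i ≠ j → ¬ rel i j) ∧ ∀ j ∈ J, ∃ t ∈ T, rel t j := by
  induction J using Finset.induction_on with
  | empty => exact ⟨∅, by simp, by simp, by simp⟩
  | insert a J _ ih =>
    obtain ⟨T, hT, h1, h2⟩ := ih fun i hi => hr i (Finset.mem_insert_of_mem hi)
    by_cases h : ∃ t ∈ T, rel t a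
    · refine ⟨T, hT.trans (Finset.subset_insert _ _), h1, ?_⟩
      intro j hj
      rcases Finset.mem_insert.mp hj with rfl | hj
      · exact h
      · exact h2 j hj
    · push Not at h
      refine ⟨insert a T, Finset.insert_subset_insert _ hT, ?_, ?_⟩
      · intro i hi j hj hij
        rcases Finset.mem_insert.mp hi with hi1 | hi1 <;>
          rcases Finset.mem_insert.mp hj with hj1 | hj1
        · exact absurd (hi1.trans hj1.symm) hij
        · rw [hi1]
          exact fun hh => h j hj1 (hs _ _ hh)
        · rw [hj1]
          exact h i hi1
        · exact h1 i hi1 j hj1 hij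
      · intro j hj
        rcases Finset.mem_insert.mp hj with rfl | hj
        · exact ⟨j, Finset.mem_insert_self _ _, hr j hj⟩
        · obtain ⟨t, ht, hh⟩ := h2 j hj
          exact ⟨t, Finset.mem_insert_of_mem ht, hh⟩

lemma pur_sep_self (q : ℕ) (d : Fin q → ℕ) (Ψ : (∀ r, Fin (d r)) → ℂ) (r : Fin q)
    (m : ℕ) (p : Fin m → ℝ) (u : Fin m → ∀ s : {s : Fin q // s ≠ r}, Fin (d s.1) → ℂ)
    (hu : ∀ j s, ip (u j s) (u j s) = 1)
    (hρ : ∀ v w, reduced q d Ψ r v w = ∑ j, (p j : ℂ) *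
      (prodVec (fun s : {s : Fin q // s ≠ r} => d s.1) (u j) v *
      (starRingEnd ℂ) (prodVec (fun s : {s : Fin q // s ≠ r} => d s.1) (u j) w))) :
    (pur q d Ψ r).re = ∑ i, ∑ j, p i * p j * ∏ t, ‖ip (u i t) (u j t)‖ ^ 2 := by
  have h := sep_purity (fun s : {s : Fin q // s ≠ r} => d s.1) (reduced q d Ψ r) m p u hu hρ
    (fun _ => True)
  have hm : ∀ v w, mix (fun s : {s : Fin q // s ≠ r} => d s.1) (fun _ => True) v w = w := by
    intro v w
    funext t
    simp [mix]
  simp only [hm, if_true] at h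
  rw [pur_self, h, Complex.ofReal_re]

lemma pur_sep_other (q : ℕ) (d : Fin q → ℕ) (Ψ : (∀ r, Fin (d r)) → ℂ) (r : Fin q)
    (m : ℕ) (p : Fin m → ℝ) (u : Fin m → ∀ s : {s : Fin q // s ≠ r}, Fin (d s.1) → ℂ)
    (hu : ∀ j s, ip (u j s) (u j s) = 1)
    (hρ : ∀ v w, reduced q d Ψ r v w = ∑ j, (p j : ℂ) *
      (prodVec (fun s : {s : Fin q // s ≠ r} => d s.1) (u j) v *
      (starRingEnd ℂ) (prodVec (fun s : {s : Fin q // s ≠ r} => d s.1) (u j) w)))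
    (s : {s : Fin q // s ≠ r}) :
    (pur q d Ψ s.1).re = ∑ i, ∑ j, p i * p j * ‖ip (u i s) (u j s)‖ ^ 2 := by
  have h := sep_purity (fun s : {s : Fin q // s ≠ r} => d s.1) (reduced q d Ψ r) m p u hu hρ
    (fun t => t = s)
  have hm : ∀ v w, mix (fun s : {s : Fin q // s ≠ r} => d s.1) (fun t => t = s) v w =
      Function.update v s (w s) := by
    intro v w
    funext t
    by_cases ht : t = s
    · subst ht; simp [mix]
    · simp [mix, ht]
  simp only [hm, Finset.prod_ite_eq', Finset.mem_univ, if_true] at h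
  rw [pur_other q d Ψ r s.1 s.2, h, Complex.ofReal_re]

lemma prod_le_factor {ι : Type} [Fintype ι] [DecidableEq ι] (c : ι → ℝ) (h0 : ∀ t, 0 ≤ c t)
    (h1 : ∀ t, c t ≤ 1) (s : ι) : ∏ t, c t ≤ c s := by
  rw [Fintype.prod_eq_mul_prod_subtype_ne _ s]
  exact mul_le_of_le_one_right (h0 s) (Finset.prod_le_one (fun t _ => h0 _) (fun t _ => h1 _))

lemma prod_dichotomy {ι : Type} [Fintype ι] [DecidableEq ι] (c : ι → ℝ) (h0 : ∀ t, 0 ≤ c t)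
    (h1 : ∀ t, c t ≤ 1) (he : ∀ s, c s = ∏ t, c t) (a b : ι) (hab : a ≠ b) :
    ∏ t, c t = 0 ∨ ∏ t, c t = 1 := by
  have h2 : ∏ t, c t ≤ c a * c b := by
    rw [Fintype.prod_eq_mul_prod_subtype_ne _ a]
    refine mul_le_mul_of_nonneg_left ?_ (h0 a)
    exact prod_le_factor (fun t : {t // t ≠ a} => c t) (fun t => h0 _) (fun t => h1 _) ⟨b, hab.symm⟩
  have h3 := h0 a
  have h4 := h1 a
  rw [he a, he b] at h2
  rw [he a] at h3 h4
  by_contra! hne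
  have h5 : 0 < ∏ t, c t := lt_of_le_of_ne h3 hne.1.symm
  have h6 : ∏ t, c t < 1 := lt_of_le_of_ne h4 hne.2
  nlinarith

set_option maxHeartbeats 400000 in
lemma case_ge_three {q : ℕ} (d : Fin q → ℕ) (hq : 2 ≤ q)
    (Ψ : (∀ r, Fin (d r)) → ℂ)
    (hΨ : ∑ v : ∀ r, Fin (d r), ‖Ψ v‖ ^ 2 = 1)
    (hsep : ∀ r : Fin q,
      FullySep (fun s : {s : Fin q // s ≠ r} => d s.1) (reduced q d Ψ r))
    (r : Fin q) (a b : {s : Fin q // s ≠ r}) (hab : a ≠ b) :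
    ∃ (U : ∀ r, Matrix (Fin (d r)) (Fin (d r)) ℂ) (R : ℕ) (lam : Fin R → ℂ),
      0 < R ∧ (∀ r, R ≤ d r) ∧
      (∀ r, U r * (U r)ᴴ = 1) ∧ (∀ r, (U r)ᴴ * U r = 1) ∧
      (∑ j, ‖lam j‖ ^ 2 = 1) ∧
      ∀ v : ∀ r, Fin (d r),
        (∑ w : ∀ r, Fin (d r), (∏ r, U r (v r) (w r)) * Ψ w)
          = ∑ j : Fin R, if ∀ r, (v r : ℕ) = (j : ℕ) then lam j else 0 := by
  have hc1 : ∀ (r : Fin q) (m : ℕ) (u : Fin m → ∀ s : {s : Fin q // s ≠ r}, Fin (d s.1) → ℂ)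
      (_ : ∀ j s, ip (u j s) (u j s) = 1) (i j : Fin m) (s : {s : Fin q // s ≠ r}),
      ‖ip (u i s) (u j s)‖ ^ 2 ≤ 1 := fun r m u hu i j s => ip_norm_le_one _ _ (hu i s) (hu j s)
  -- purities are monotone, hence all equal
  have hle : ∀ r s : Fin q, s ≠ r → (pur q d Ψ r).re ≤ (pur q d Ψ s).re := by
    intro r s hs
    obtain ⟨m, p, u, hp, hp1, hu, hρ⟩ := fullySep_normalized _ _ (hsep r)
    rw [pur_sep_self q d Ψ r m p u hu hρ, pur_sep_other q d Ψ r m p u hu hρ ⟨s, hs⟩]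
    refine Finset.sum_le_sum fun i _ => Finset.sum_le_sum fun j _ => ?_
    refine mul_le_mul_of_nonneg_left ?_ (mul_nonneg (hp i) (hp j))
    exact prod_le_factor (fun t => ‖ip (u i t) (u j t)‖ ^ 2) (fun t => by positivity)
      (fun t => hc1 r m u hu i j t) ⟨s, hs⟩
  obtain ⟨m, p, u, hp, hp1, hu, hρ⟩ := fullySep_normalized _ _ (hsep r)
  have heq : ∀ i j, 0 < p i → 0 < p j → ∀ s, ‖ip (u i s) (u j s)‖ ^ 2 =
      ∏ t, ‖ip (u i t) (u j t)‖ ^ 2 := by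
    intro i j hi hj s
    have h1 := le_antisymm (hle r s.1 s.2) (hle s.1 r s.2.symm)
    rw [pur_sep_self q d Ψ r m p u hu hρ, pur_sep_other q d Ψ r m p u hu hρ s] at h1
    have hterm : ∀ i j, p i * p j * ∏ t, ‖ip (u i t) (u j t)‖ ^ 2 ≤
        p i * p j * ‖ip (u i s) (u j s)‖ ^ 2 := fun i j =>
      mul_le_mul_of_nonneg_left
        (prod_le_factor (fun t => ‖ip (u i t) (u j t)‖ ^ 2) (fun t => by positivity)
          (fun t => hc1 r m u hu i j t) s) (mul_nonneg (hp i) (hp j))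
    have h2 := (Finset.sum_eq_sum_iff_of_le
      (fun i _ => Finset.sum_le_sum fun j _ => hterm i j)).mp h1 i (Finset.mem_univ _)
    have h3 := (Finset.sum_eq_sum_iff_of_le (fun j _ => hterm i j)).mp h2 j (Finset.mem_univ _)
    exact (mul_left_cancel₀ (mul_pos hi hj).ne' h3).symm
  obtain ⟨V, hVd⟩ : ∃ V : Fin m → (∀ s : {s : Fin q // s ≠ r}, Fin (d s.1)) → ℂ, ∀ i,
    prodVec (fun s : {s : Fin q // s ≠ r} => d s.1) (u i) = V i := ⟨_, fun _ => rfl⟩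
  have hV : ∀ i j, ip (V i) (V j) = ∏ s, ip (u i s) (u j s) := fun i j => by
    rw [← hVd, ← hVd]; exact ip_prodVec _ _ _
  have hVn : ∀ i j, ‖ip (V i) (V j)‖ ^ 2 = ∏ s, ‖ip (u i s) (u j s)‖ ^ 2 := by
    intro i j
    rw [hV, norm_prod, Finset.prod_pow]
  have hV1 : ∀ i, ip (V i) (V i) = 1 := by
    intro i; rw [hV]; simp [hu]
  have hdich : ∀ i j, 0 < p i → 0 < p j → ip (V i) (V j) ≠ 0 → ‖ip (V i) (V j)‖ ^ 2 = 1 := by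
    intro i j hi hj hne
    rcases prod_dichotomy (fun t => ‖ip (u i t) (u j t)‖ ^ 2) (fun t => by positivity)
      (fun t => hc1 r m u hu i j t) (heq i j hi hj) a b hab with h | h
    · rw [← hVn] at h
      simp at h
      exact absurd h hne
    · rw [hVn]; exact h
  obtain ⟨T, hTJ, hT1, hT2⟩ := exists_rep (fun i j => ip (V i) (V j) ≠ 0)
    (fun i j h => by rw [← ip_conj]; simpa using h) (Finset.univ.filter fun i => 0 < p i)
    (fun i _ => by rw [hV1]; exact one_ne_zero)
  have hTp : ∀ t : T, 0 < p t.1 := fun t => (Finset.mem_filter.mp (hTJ t.2)).2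
  have hTort : ∀ t t' : T, ip (V t.1) (V t'.1) = if t = t' then 1 else 0 := by
    intro t t'
    by_cases h : t = t'
    · subst h; simp [hV1]
    · rw [if_neg h]
      by_contra hne
      exact hT1 t.1 t.2 t'.1 t'.2 (fun h' => h (Subtype.ext h')) hne
  have hbes : ∀ j, ∑ t : T, ‖ip (V t.1) (V j)‖ ^ 2 ≤ 1 := fun j =>
    bessel (fun t : T => V t.1) hTort (V j) (hV1 j)
  have hpz : ∀ j, ¬ 0 < p j → p j = 0 := fun j h => le_antisymm (not_lt.mp h) (hp j)
  have hbes1 : ∀ j, 0 < p j → ∑ t : T, ‖ip (V t.1) (V j)‖ ^ 2 = 1 := by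
    intro j hj
    refine le_antisymm (hbes j) ?_
    obtain ⟨t, ht, hne⟩ := hT2 j (by simpa using hj)
    have hd := hdich t j (hTp ⟨t, ht⟩) hj hne
    have hnn : ∀ t ∈ (Finset.univ : Finset T), 0 ≤ ‖ip (V t.1) (V j)‖ ^ 2 :=
      fun _ _ => sq_nonneg _
    have hsl := Finset.single_le_sum hnn (Finset.mem_univ (⟨t, ht⟩ : T))
    linarith
  refine core1 d hq Ψ hΨ r T (fun t => u t.1) ?_
    (fun t => ∑ j, p j * ‖ip (V t.1) (V j)‖ ^ 2) ?_ ?_ ?_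
  · intro s t t'
    by_cases h : t = t'
    · subst h; simp [hu]
    · rw [if_neg h]
      have h1 := heq t.1 t'.1 (hTp t) (hTp t') s
      rw [← hVn, hTort, if_neg h] at h1
      simpa using h1
  · intro t
    refine lt_of_lt_of_le (hTp t) ?_
    have hnn : ∀ j ∈ (Finset.univ : Finset (Fin m)), 0 ≤ p j * ‖ip (V t.1) (V j)‖ ^ 2 :=
      fun j _ => mul_nonneg (hp j) (sq_nonneg _)
    have hsl := Finset.single_le_sum hnn (Finset.mem_univ t.1)
    rw [hV1, norm_one, one_pow, mul_one] at hsl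
    exact hsl
  · rw [Finset.sum_comm, ← hp1]
    refine Finset.sum_congr rfl fun j _ => ?_
    rw [← Finset.mul_sum]
    by_cases hj : 0 < p j
    · rw [hbes1 j hj, mul_one]
    · rw [hpz j hj, zero_mul]
  · intro t t'
    simp only [hVd]
    have h1 : ip (V t.1) (reduced q d Ψ r *ᵥ V t'.1) =
        ∑ j, (p j : ℂ) * (ip (V t.1) (V j) * ip (V j) (V t'.1)) := by
      have h2 : reduced q d Ψ r *ᵥ V t'.1 =
          fun v => ∑ j, (p j : ℂ) * (V j v * ip (V j) (V t'.1)) := by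
        funext v
        simp only [Matrix.mulVec, dotProduct, hρ, ip, Finset.sum_mul, Finset.mul_sum]
        rw [Finset.sum_comm]
        exact Finset.sum_congr rfl fun j _ => Finset.sum_congr rfl fun w _ => by
          rw [hVd]; ring
      rw [h2]
      conv_lhs => unfold ip
      simp only [Finset.mul_sum]
      rw [Finset.sum_comm]
      refine Finset.sum_congr rfl fun j _ => ?_
      conv_rhs => rw [ip, Finset.sum_mul, Finset.mul_sum]
      refine Finset.sum_congr rfl fun w _ => ?_
      simp only [ip, Finset.mul_sum]
      exact Finset.sum_congr rfl fun x _ => by ring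
    refine h1.trans ?_
    by_cases h : t = t'
    · subst h
      rw [if_pos rfl]
      push_cast
      refine Finset.sum_congr rfl fun j _ => ?_
      rw [← ip_conj (V t.1) (V j), Complex.mul_conj']
    · rw [if_neg h]
      refine Finset.sum_eq_zero fun j _ => ?_
      by_cases hj : 0 < p j
      · by_contra hne
        have hn1 : ip (V t.1) (V j) ≠ 0 := fun h0 => hne (by rw [h0]; ring)
        have hn2 : ip (V t'.1) (V j) ≠ 0 := fun h0 => hne (by
          rw [← ip_conj (V t'.1) (V j), h0]; simp)
        have e1 := hdich t.1 j (hTp t) hj hn1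
        have e2 := hdich t'.1 j (hTp t') hj hn2
        have h3 := Finset.sum_le_sum_of_subset_of_nonneg (Finset.subset_univ ({t, t'} : Finset T))
          (f := fun t : T => ‖ip (V t.1) (V j)‖ ^ 2) (fun _ _ _ => sq_nonneg _)
        rw [Finset.sum_pair h, e1, e2] at h3
        have := hbes j
        linarith
      · rw [hpz j hj]; simp

theorem all_reductions_fullySep_implies_GHZ
    (q : ℕ) (hq : 2 ≤ q) (d : Fin q → ℕ) (hd : ∀ r, 0 < d r)
    (Ψ : (∀ r, Fin (d r)) → ℂ)
    (hΨ : ∑ v : ∀ r, Fin (d r), ‖Ψ v‖ ^ 2 = 1)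
    (hsep : ∀ r : Fin q,
      FullySep (fun s : {s : Fin q // s ≠ r} => d s.1) (reduced q d Ψ r)) :
    ∃ (U : ∀ r, Matrix (Fin (d r)) (Fin (d r)) ℂ) (R : ℕ) (lam : Fin R → ℂ),
      0 < R ∧ (∀ r, R ≤ d r) ∧
      (∀ r, U r * (U r)ᴴ = 1) ∧ (∀ r, (U r)ᴴ * U r = 1) ∧
      (∑ j, ‖lam j‖ ^ 2 = 1) ∧
      ∀ v : ∀ r, Fin (d r),
        (∑ w : ∀ r, Fin (d r), (∏ r, U r (v r) (w r)) * Ψ w)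
          = ∑ j : Fin R, if ∀ r, (v r : ℕ) = (j : ℕ) then lam j else 0 := by
  have hr : 0 < q := by omega
  let r : Fin q := ⟨0, hr⟩
  let a : {s : Fin q // s ≠ r} := ⟨⟨1, by omega⟩, by simp [r]⟩
  by_cases h3 : q = 2
  · have hun : Unique {s : Fin q // s ≠ r} :=
      { default := a
        uniq := by
          rintro ⟨s, hs⟩
          apply Subtype.ext
          apply Fin.ext
          have h1 : (s : ℕ) ≠ 0 := fun h => hs (Fin.ext h)
          have h2 := s.2
          change (s : ℕ) = 1
          omega }
    exact case_two d hq Ψ hΨ r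
  · exact case_ge_three d hq Ψ hΨ hsep r a ⟨⟨2, by omega⟩, by simp [r]⟩ (by simp [a])

end
end

section
/- For every three-qubit pure state Ψ (unit vector in ℂ²⊗ℂ²⊗ℂ²), the third-order negativity satisfies I₅(Ψ) ≥ 2/9, and equality holds if and only if Ψ is LU-equivalent to the W-state (|100⟩+|010⟩+|001⟩)/√3. -/
open scoped BigOperators
open Matrix

noncomputable section

abbrev Q3 : Type := Fin 2 × Fin 2 × Fin 2

/-- Partial transpose over the second tensor factor. -/
def ptranspose {d d' : ℕ} (M : Matrix (Fin d × Fin d') (Fin d × Fin d') ℂ) :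
    Matrix (Fin d × Fin d') (Fin d × Fin d') ℂ :=
  fun p q => M (p.1, q.2) (q.1, p.2)

/-- Reduced density matrix `ρ_BC` of a three-qubit pure state. -/
def rhoBC (Ψ : Q3 → ℂ) : Matrix (Fin 2 × Fin 2) (Fin 2 × Fin 2) ℂ :=
  fun p q => ∑ a : Fin 2, Ψ (a, p.1, p.2) * (starRingEnd ℂ) (Ψ (a, q.1, q.2))

/-- Third-order negativity of a three-qubit pure state. -/
def I5 (Ψ : Q3 → ℂ) : ℝ :=
  ((ptranspose (rhoBC Ψ)) ^ 3).trace.re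

/-- `LUequiv Ψ Ψ'` : `Ψ' = (U_A ⊗ U_B ⊗ U_C) Ψ` for some `2×2` unitaries. -/
def LUequiv (Ψ Ψ' : Q3 → ℂ) : Prop :=
  ∃ UA UB UC : Matrix (Fin 2) (Fin 2) ℂ,
    UA * UAᴴ = 1 ∧ UAᴴ * UA = 1 ∧
    UB * UBᴴ = 1 ∧ UBᴴ * UB = 1 ∧
    UC * UCᴴ = 1 ∧ UCᴴ * UC = 1 ∧
    ∀ v : Q3, Ψ' v = ∑ w : Q3, UA v.1 w.1 * UB v.2.1 w.2.1 * UC v.2.2 w.2.2 * Ψ w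

/-- The three-qubit W-state. -/
def Wstate : Q3 → ℂ := fun v =>
  if v = (1, 0, 0) ∨ v = (0, 1, 0) ∨ v = (0, 0, 1)
    then ((Real.sqrt 3 : ℝ) : ℂ)⁻¹ else 0

def rB (Ψ : Q3 → ℂ) (i j : Fin 2) : ℂ := ∑ a : Fin 2, ∑ c : Fin 2, Ψ (a, i, c) * (starRingEnd ℂ) (Ψ (a, j, c))
def rC (Ψ : Q3 → ℂ) (i j : Fin 2) : ℂ := ∑ a : Fin 2, ∑ b : Fin 2, Ψ (a, b, i) * (starRingEnd ℂ) (Ψ (a, b, j))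

set_option maxHeartbeats 4000000 in
theorem kempe (Ψ : Q3 → ℂ) :
    ((ptranspose (rhoBC Ψ)) ^ 3).trace =
      3 * (∑ i, ∑ j, ∑ k, ∑ l, rB Ψ i j * rC Ψ k l * rhoBC Ψ (j, l) (i, k))
      - (∑ i, ∑ j, ∑ k, rB Ψ i j * rB Ψ j k * rB Ψ k i)
      - (∑ i, ∑ j, ∑ k, rC Ψ i j * rC Ψ j k * rC Ψ k i) := by
  simp only [pow_succ, pow_zero, one_mul, Matrix.trace, Matrix.diag, Matrix.mul_apply, Fintype.sum_prod_type,
    Fin.sum_univ_two, ptranspose, rhoBC, rB, rC]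
  generalize (starRingEnd ℂ) (Ψ (0,0,0)) = y0
  generalize (starRingEnd ℂ) (Ψ (0,0,1)) = y1
  generalize (starRingEnd ℂ) (Ψ (0,1,0)) = y2
  generalize (starRingEnd ℂ) (Ψ (0,1,1)) = y3
  generalize (starRingEnd ℂ) (Ψ (1,0,0)) = y4
  generalize (starRingEnd ℂ) (Ψ (1,0,1)) = y5
  generalize (starRingEnd ℂ) (Ψ (1,1,0)) = y6
  generalize (starRingEnd ℂ) (Ψ (1,1,1)) = y7
  generalize Ψ (0,0,0) = x0
  generalize Ψ (0,0,1) = x1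
  generalize Ψ (0,1,0) = x2
  generalize Ψ (0,1,1) = x3
  generalize Ψ (1,0,0) = x4
  generalize Ψ (1,0,1) = x5
  generalize Ψ (1,1,0) = x6
  generalize Ψ (1,1,1) = x7
  ring
/-- apply local unitaries on B and C -/
def actBC (U V : Matrix (Fin 2) (Fin 2) ℂ) (Ψ : Q3 → ℂ) : Q3 → ℂ :=
  fun v => ∑ j, ∑ k, U v.2.1 j * V v.2.2 k * Ψ (v.1, j, k)
def actA (U : Matrix (Fin 2) (Fin 2) ℂ) (Ψ : Q3 → ℂ) : Q3 → ℂ :=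
  fun v => ∑ j, U v.1 j * Ψ (j, v.2)

theorem un_entries (U : Matrix (Fin 2) (Fin 2) ℂ) (h : Uᴴ * U = 1) (i j : Fin 2) :
    (starRingEnd ℂ) (U 0 i) * U 0 j + (starRingEnd ℂ) (U 1 i) * U 1 j = if i = j then 1 else 0 := by
  have := congrFun (congrFun h i) j
  simpa [Matrix.mul_apply, Fin.sum_univ_two, Matrix.one_apply] using this

theorem rho_actA (U : Matrix (Fin 2) (Fin 2) ℂ) (h : Uᴴ * U = 1) (Ψ : Q3 → ℂ) :
    rhoBC (actA U Ψ) = rhoBC Ψ := by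
  funext p q
  have h00 := un_entries U h 0 0
  have h01 := un_entries U h 0 1
  have h10 := un_entries U h 1 0
  have h11 := un_entries U h 1 1
  simp at h00 h01 h10 h11
  simp only [rhoBC, actA, Fin.sum_univ_two, map_add, map_mul]
  generalize Ψ (0, p.1, p.2) = x0
  generalize Ψ (1, p.1, p.2) = x1
  generalize (starRingEnd ℂ) (Ψ (0, q.1, q.2)) = y0
  generalize (starRingEnd ℂ) (Ψ (1, q.1, q.2)) = y1
  linear_combination x0*y0*h00 + x1*y1*h11+x1*y0*h01+x0*y1*h10

open scoped Kronecker in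
theorem pt_actBC (U V : Matrix (Fin 2) (Fin 2) ℂ) (Ψ : Q3 → ℂ) :
    ptranspose (rhoBC (actBC U V Ψ)) =
      (U ⊗ₖ V.map (starRingEnd ℂ)) * ptranspose (rhoBC Ψ) * (U ⊗ₖ V.map (starRingEnd ℂ))ᴴ := by
  ext ⟨b, c⟩ ⟨b', c'⟩
  simp only [Matrix.mul_apply, Fintype.sum_prod_type,
    Fin.sum_univ_two, ptranspose, rhoBC, actBC, Matrix.conjTranspose_apply, Matrix.kroneckerMap_apply, Matrix.map_apply, map_add, map_mul, star_mul', RCLike.star_def, Complex.conj_conj]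
  ring

open scoped Kronecker in
theorem I5_actBC (U V : Matrix (Fin 2) (Fin 2) ℂ) (hU : Uᴴ * U = 1) (hV : Vᴴ * V = 1) (Ψ : Q3 → ℂ) :
    I5 (actBC U V Ψ) = I5 Ψ := by
  have hV' : (V.map (starRingEnd ℂ))ᴴ * V.map (starRingEnd ℂ) = 1 := by
    ext i j
    have := congrArg (starRingEnd ℂ) (un_entries V hV i j)
    simp [Matrix.mul_apply, Fin.sum_univ_two] at this ⊢
    rw [this]; simp [Matrix.one_apply]
  have hK : (U ⊗ₖ V.map (starRingEnd ℂ))ᴴ * (U ⊗ₖ V.map (starRingEnd ℂ)) = 1 := by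
    rw [Matrix.conjTranspose_kronecker, ← Matrix.mul_kronecker_mul, hU, hV', Matrix.one_kronecker_one]
  unfold I5
  rw [pt_actBC]
  generalize (U ⊗ₖ V.map (starRingEnd ℂ)) = K at *
  generalize ptranspose (rhoBC Ψ) = G
  have : (K * G * Kᴴ)^3 = K * (G^3 * Kᴴ) := by
    calc _ = K * G * (Kᴴ * K) * G * (Kᴴ * K) * G * Kᴴ := by simp only [pow_succ, pow_zero, one_mul, Matrix.mul_assoc]
      _ = _ := by rw [hK]; simp only [pow_succ, pow_zero, one_mul, mul_one, Matrix.mul_assoc]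
  rw [this, Matrix.trace_mul_comm, Matrix.mul_assoc, hK, mul_one]

theorem diag_exists (H : Matrix (Fin 2) (Fin 2) ℂ) (hH : H.IsHermitian) :
    ∃ U : Matrix (Fin 2) (Fin 2) ℂ, Uᴴ * U = 1 ∧ (U * H * Uᴴ) 0 1 = 0 ∧ (U * H * Uᴴ) 1 0 = 0 ∧
      ((U * H * Uᴴ) 1 1).re ≤ ((U * H * Uᴴ) 0 0).re := by
  obtain ⟨W, hW, d, hd⟩ : ∃ W : Matrix (Fin 2) (Fin 2) ℂ, Wᴴ * W = 1 ∧ ∃ d, W * H * Wᴴ = diagonal d := by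
    have h1 : (hH.eigenvectorUnitary : Matrix (Fin 2) (Fin 2) ℂ)ᴴ * hH.eigenvectorUnitary = 1 :=
      Unitary.coe_star_mul_self hH.eigenvectorUnitary
    have h2 : (hH.eigenvectorUnitary : Matrix (Fin 2) (Fin 2) ℂ) * (hH.eigenvectorUnitary : Matrix (Fin 2) (Fin 2) ℂ)ᴴ = 1 :=
      Unitary.coe_mul_star_self hH.eigenvectorUnitary
    refine ⟨(hH.eigenvectorUnitary : Matrix (Fin 2) (Fin 2) ℂ)ᴴ, by simpa using h2, RCLike.ofReal ∘ hH.eigenvalues, ?_⟩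
    have := hH.spectral_theorem
    rw [Unitary.conjStarAlgAut_apply] at this
    generalize (hH.eigenvectorUnitary : Matrix (Fin 2) (Fin 2) ℂ) = E at *
    generalize diagonal (RCLike.ofReal ∘ hH.eigenvalues : Fin 2 → ℂ) = D at *
    rw [this, Matrix.conjTranspose_conjTranspose]
    calc _ = (Eᴴ * E) * D * (Eᴴ * E) := by simp only [Matrix.mul_assoc, Matrix.star_eq_conjTranspose]
      _ = D := by simp [h1]
  by_cases h : (d 1).re ≤ (d 0).re
  · exact ⟨W, hW, by simp [hd], by simp [hd], by simpa [hd] using h⟩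
  · have hS : (!![0,1;1,0] : Matrix (Fin 2) (Fin 2) ℂ)ᴴ * !![0,1;1,0] = 1 := by
      ext i j; fin_cases i <;> fin_cases j <;> simp [Matrix.mul_apply, Fin.sum_univ_two]
    have key : (!![0,1;1,0] * W) * H * (!![0,1;1,0] * W)ᴴ = !![d 1, 0; 0, d 0] := by
      rw [Matrix.conjTranspose_mul]
      calc _ = !![0,1;1,0] * (W * H * Wᴴ) * (!![0,1;1,0] : Matrix (Fin 2) (Fin 2) ℂ)ᴴ := by simp only [Matrix.mul_assoc]
        _ = _ := by
          rw [hd]; ext i j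
          fin_cases i <;> fin_cases j <;> simp [Matrix.vecMul, dotProduct, Fin.sum_univ_two, Matrix.diagonal, Matrix.vecHead, Matrix.vecTail]
    refine ⟨!![0,1;1,0] * W, ?_, ?_, ?_, ?_⟩
    · rw [Matrix.conjTranspose_mul, Matrix.mul_assoc, ← Matrix.mul_assoc _ _ W, hS, one_mul, hW]
    · rw [key]; simp
    · rw [key]; simp
    · rw [key]; simpa using (not_le.mp h).le

theorem real_part (p q r s : ℝ) (hs : 0 ≤ s)
    (h1 : p + q + r + s = 1) (hB : r + s ≤ p + q) (hC : q + s ≤ p + r) (I : ℝ)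
    (hI : I = 3 * ((p+q)*(p+r)*p + (p+q)*(q+s)*q + (r+s)*(p+r)*r + (r+s)*(q+s)*s)
      - ((p+q)^3 + (r+s)^3) - ((p+r)^3+(q+s)^3)) :
    2/9 ≤ I ∧ (I = 2/9 → s = 0 ∧ p = 1/3 ∧ q = 1/3 ∧ r = 1/3) := by
  obtain ⟨b, hb⟩ : ∃ b, b = (p+q)-(r+s) := ⟨_, rfl⟩
  obtain ⟨c, hc⟩ : ∃ c, c = (p+r)-(q+s) := ⟨_, rfl⟩
  have hb0 : 0 ≤ b := by linarith
  have hc0 : 0 ≤ c := by linarith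
  have hI' : I = 1/4 + 3/4 * (b*c*(b+c-1+4*s)) := by
    obtain rfl : p = 1 - q - r - s := by linarith
    rw [hI, hb, hc]; ring
  have hbc := mul_nonneg hb0 hc0
  have hbcs := mul_nonneg hbc hs
  obtain ⟨z, hz⟩ : ∃ z, z = 1 - b - c := ⟨_, rfl⟩
  have id : 1 - 27*(b*c*z) = ((b-c)^2+(c-z)^2+(z-b)^2)/2 + 3*(b*(c-z)^2+c*(z-b)^2+z*(b-c)^2) := by
    rw [hz]; ring
  have hI2 : I = 2/9 + (1 - 27*(b*c*z))/36 + 3 * (b*c*s) := by rw [hI', hz]; ring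
  by_cases hz0 : 0 ≤ z
  · have e1 := mul_nonneg hb0 (sq_nonneg (c-z))
    have e2 := mul_nonneg hc0 (sq_nonneg (z-b))
    have e3 := mul_nonneg hz0 (sq_nonneg (b-c))
    have f1 := sq_nonneg (b-c)
    have f2 := sq_nonneg (c-z)
    have f3 := sq_nonneg (z-b)
    refine ⟨by linarith, fun hE => ?_⟩
    have g1 : b - c = 0 := pow_eq_zero_iff (two_ne_zero) |>.1 (by linarith : (b-c)^2 = 0)
    have g2 : c - z = 0 := pow_eq_zero_iff (two_ne_zero) |>.1 (by linarith : (c-z)^2 = 0)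
    have hb3 : b = 1/3 := by linarith
    have hc3 : c = 1/3 := by linarith
    have : b*c*s = 0 := by linarith
    have hs0 : s = 0 := by rw [hb3, hc3] at this; linarith
    exact ⟨hs0, by linarith, by linarith, by linarith⟩
  · have : b*c*z ≤ 0 := mul_nonpos_of_nonneg_of_nonpos hbc (not_le.mp hz0).le
    exact ⟨by linarith, fun hE => by linarith⟩
def pBC (Ψ : Q3 → ℂ) (b c : Fin 2) : ℝ := ‖Ψ (0, b, c)‖ ^ 2 + ‖Ψ (1, b, c)‖ ^ 2

theorem pBC_nonneg (Ψ : Q3 → ℂ) (b c : Fin 2) : 0 ≤ pBC Ψ b c := by unfold pBC; positivity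

theorem rho_diag (Ψ : Q3 → ℂ) (b c : Fin 2) : rhoBC Ψ (b, c) (b, c) = (pBC Ψ b c : ℂ) := by
  simp [rhoBC, pBC, Complex.mul_conj']

theorem rB_diag (Ψ : Q3 → ℂ) (b : Fin 2) : rB Ψ b b = ((pBC Ψ b 0 + pBC Ψ b 1 : ℝ) : ℂ) := by
  simp [rB, pBC, Complex.mul_conj']; ring

theorem rC_diag (Ψ : Q3 → ℂ) (c : Fin 2) : rC Ψ c c = ((pBC Ψ 0 c + pBC Ψ 1 c : ℝ) : ℂ) := by
  simp [rC, pBC, Complex.mul_conj']; ring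

theorem norm_sum (Ψ : Q3 → ℂ) : ∑ v : Q3, ‖Ψ v‖ ^ 2 = pBC Ψ 0 0 + pBC Ψ 0 1 + pBC Ψ 1 0 + pBC Ψ 1 1 := by
  simp [Fintype.sum_prod_type, pBC]; ring

theorem rB_act (U V : Matrix (Fin 2) (Fin 2) ℂ) (hV : Vᴴ * V = 1) (Ψ : Q3 → ℂ) :
    (Matrix.of (rB (actBC U V Ψ))) = U * Matrix.of (rB Ψ) * Uᴴ := by
  ext i j
  have h00 := un_entries V hV 0 0
  have h01 := un_entries V hV 0 1
  have h10 := un_entries V hV 1 0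
  have h11 := un_entries V hV 1 1
  simp at h00 h01 h10 h11
  simp only [Matrix.of_apply, rB, actBC, Fin.sum_univ_two, map_add, map_mul, Matrix.mul_apply, Matrix.conjTranspose_apply, RCLike.star_def]
  let co (k l : Fin 2) : ℂ := ∑ a : Fin 2, (∑ m, U i m * Ψ (a, m, k)) * (∑ m, (starRingEnd ℂ) (U j m) * (starRingEnd ℂ) (Ψ (a, m, l)))
  have hco : ∀ k l, co k l = ∑ a : Fin 2, (∑ m, U i m * Ψ (a, m, k)) * (∑ m, (starRingEnd ℂ) (U j m) * (starRingEnd ℂ) (Ψ (a, m, l))) := fun _ _ => rfl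
  simp only [Fin.sum_univ_two] at hco
  have e00 := hco 0 0
  have e01 := hco 0 1
  have e10 := hco 1 0
  have e11 := hco 1 1
  linear_combination (co 0 0) * h00 + (co 1 0) * h01 + (co 0 1) * h10 + (co 1 1) * h11 +
    (1 - ((starRingEnd ℂ) (V 0 0) * V 0 0 + (starRingEnd ℂ) (V 1 0) * V 1 0)) * e00 + (1 - ((starRingEnd ℂ) (V 0 1) * V 0 1 + (starRingEnd ℂ) (V 1 1) * V 1 1)) * e11
    - ((starRingEnd ℂ) (V 0 0) * V 0 1 + (starRingEnd ℂ) (V 1 0) * V 1 1) * e10 - ((starRingEnd ℂ) (V 0 1) * V 0 0 + (starRingEnd ℂ) (V 1 1) * V 1 0) * e01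

/-- swap of the roles of B and C -/
def swapBC (Ψ : Q3 → ℂ) : Q3 → ℂ := fun v => Ψ (v.1, v.2.2, v.2.1)

theorem rC_act (U V : Matrix (Fin 2) (Fin 2) ℂ) (hU : Uᴴ * U = 1) (Ψ : Q3 → ℂ) :
    (Matrix.of (rC (actBC U V Ψ))) = V * Matrix.of (rC Ψ) * Vᴴ := by
  have h := rB_act V U hU (swapBC Ψ)
  have e : actBC V U (swapBC Ψ) = swapBC (actBC U V Ψ) := by
    funext v; simp [actBC, swapBC]; ring
  rw [e] at h
  exact h

theorem herm_rB (Ψ : Q3 → ℂ) : (Matrix.of (rB Ψ)).IsHermitian := by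
  ext i j; simp [rB, mul_comm]

theorem herm_rC (Ψ : Q3 → ℂ) : (Matrix.of (rC Ψ)).IsHermitian := by
  ext i j; simp [rC, mul_comm]

theorem norm_act (U V : Matrix (Fin 2) (Fin 2) ℂ) (hU : Uᴴ * U = 1) (hV : Vᴴ * V = 1) (Ψ : Q3 → ℂ)
    (h : ∑ v : Q3, ‖Ψ v‖ ^ 2 = 1) : ∑ v : Q3, ‖actBC U V Ψ v‖ ^ 2 = 1 := by
  have key : ∀ Φ : Q3 → ℂ, (Matrix.of (rB Φ)).trace = ((∑ v : Q3, ‖Φ v‖ ^ 2 : ℝ) : ℂ) := by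
    intro Φ
    rw [norm_sum]
    simp only [Matrix.trace, Matrix.diag, Fin.sum_univ_two, Matrix.of_apply, rB_diag]
    push_cast; ring
  have h2 := key (actBC U V Ψ)
  rw [rB_act U V hV, Matrix.mul_assoc, Matrix.trace_mul_comm, Matrix.mul_assoc, hU, mul_one, key, h] at h2
  exact_mod_cast h2.symm

theorem aligned_I5 (Φ : Q3 → ℂ) (b01 : rB Φ 0 1 = 0) (b10 : rB Φ 1 0 = 0) (c01 : rC Φ 0 1 = 0) (c10 : rC Φ 1 0 = 0) :
    I5 Φ = 3 * ((pBC Φ 0 0+pBC Φ 0 1)*(pBC Φ 0 0+pBC Φ 1 0)*pBC Φ 0 0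
        + (pBC Φ 0 0+pBC Φ 0 1)*(pBC Φ 0 1+pBC Φ 1 1)*pBC Φ 0 1
        + (pBC Φ 1 0+pBC Φ 1 1)*(pBC Φ 0 0+pBC Φ 1 0)*pBC Φ 1 0
        + (pBC Φ 1 0+pBC Φ 1 1)*(pBC Φ 0 1+pBC Φ 1 1)*pBC Φ 1 1)
      - ((pBC Φ 0 0+pBC Φ 0 1)^3 + (pBC Φ 1 0+pBC Φ 1 1)^3)
      - ((pBC Φ 0 0+pBC Φ 1 0)^3+(pBC Φ 0 1+pBC Φ 1 1)^3) := by
  unfold I5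
  rw [kempe]
  simp only [Fin.sum_univ_two, b01, b10, c01, c10, rho_diag, rB_diag, rC_diag]
  rw [← Complex.ofReal_re (3 * _ - _ - _)]
  congr 1
  push_cast
  ring

theorem aligned_eq (Φ : Q3 → ℂ) (b01 : rB Φ 0 1 = 0) (c01 : rC Φ 0 1 = 0)
    (h00 : pBC Φ 0 0 = 1/3) (h01 : pBC Φ 0 1 = 1/3) (h10 : pBC Φ 1 0 = 1/3) (h11 : pBC Φ 1 1 = 0) :
    ∃ UA D : Matrix (Fin 2) (Fin 2) ℂ, UAᴴ * UA = 1 ∧ Dᴴ * D = 1 ∧ Φ = actA UA (actBC D 1 Wstate) := by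
  have z0 : Φ (0,1,1) = 0 := by
    have : ‖Φ (0,1,1)‖^2 = 0 := by unfold pBC at h11; nlinarith [sq_nonneg ‖Φ (0,1,1)‖, sq_nonneg ‖Φ (1,1,1)‖]
    simpa using this
  have z1 : Φ (1,1,1) = 0 := by
    have : ‖Φ (1,1,1)‖^2 = 0 := by unfold pBC at h11; nlinarith [sq_nonneg ‖Φ (0,1,1)‖, sq_nonneg ‖Φ (1,1,1)‖]
    simpa using this
  have n00 := rho_diag Φ 0 0
  have n01 := rho_diag Φ 0 1
  have n10 := rho_diag Φ 1 0
  rw [h00] at n00; rw [h01] at n01; rw [h10] at n10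
  simp [rhoBC] at n00 n01 n10
  simp [rB, z0, z1] at b01
  simp [rC, z0, z1] at c01
  have b01' := congrArg (starRingEnd ℂ) b01
  have c01' := congrArg (starRingEnd ℂ) c01
  simp at b01' c01'
  have s3 : ((Real.sqrt 3 : ℝ) : ℂ) * ((Real.sqrt 3 : ℝ) : ℂ) = 3 := by
    rw [← Complex.ofReal_mul, Real.mul_self_sqrt (by norm_num)]; norm_num
  have s0 : ((Real.sqrt 3 : ℝ) : ℂ) ≠ 0 := by intro h; rw [h] at s3; norm_num at s3
  have sc : (starRingEnd ℂ) ((Real.sqrt 3 : ℝ) : ℂ) = ((Real.sqrt 3 : ℝ) : ℂ) := Complex.conj_ofReal _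
  generalize hs : ((Real.sqrt 3 : ℝ) : ℂ) = s at s3 s0 sc
  obtain ⟨UA, hUA⟩ : ∃ UA : Matrix (Fin 2) (Fin 2) ℂ, UA = !![s * Φ (0,0,1), s * Φ (0,0,0); s * Φ (1,0,1), s * Φ (1,0,0)] := ⟨_, rfl⟩
  have hU : UAᴴ * UA = 1 := by
    rw [hUA]
    ext i j; fin_cases i <;> fin_cases j <;> simp [Matrix.mul_apply, Fin.sum_univ_two, sc]
    · linear_combination s * s * n01 + s3 / 3
    · linear_combination s * s * c01
    · linear_combination s * s * c01'
    · linear_combination s * s * n00 + s3 / 3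
  have hU2 : UA * UAᴴ = 1 := mul_eq_one_comm.mp hU
  have g00 := congrFun (congrFun hU2 0) 0
  have g01 := congrFun (congrFun hU2 0) 1
  have g10 := congrFun (congrFun hU2 1) 0
  have g11 := congrFun (congrFun hU2 1) 1
  simp [hUA, Matrix.mul_apply, Fin.sum_univ_two, sc] at g00 g01 g10 g11
  obtain ⟨e, he⟩ : ∃ e, e = 3 * ((starRingEnd ℂ) (Φ (0,0,1)) * Φ (0,1,0) + (starRingEnd ℂ) (Φ (1,0,1)) * Φ (1,1,0)) := ⟨_, rfl⟩
  have w0 : Φ (0,1,0) = e * Φ (0,0,1) := by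
    rw [he]
    linear_combination -Φ (0,1,0) * g00 - Φ (1,1,0) * g01 + Φ (0,0,1) * ((starRingEnd ℂ) (Φ (0,0,1)) * Φ (0,1,0) + (starRingEnd ℂ) (Φ (1,0,1)) * Φ (1,1,0)) * s3 + s * s * Φ (0,0,0) * b01'
  have w1 : Φ (1,1,0) = e * Φ (1,0,1) := by
    rw [he]
    linear_combination -Φ (0,1,0) * g10 - Φ (1,1,0) * g11 + Φ (1,0,1) * ((starRingEnd ℂ) (Φ (0,0,1)) * Φ (0,1,0) + (starRingEnd ℂ) (Φ (1,0,1)) * Φ (1,1,0)) * s3 + s * s * Φ (1,0,0) * b01'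
  have hee : (starRingEnd ℂ) e * e = 1 := by
    rw [w0, w1] at n10
    simp at n10
    linear_combination 3 * n10 - 3 * ((starRingEnd ℂ) e * e) * n01
  refine ⟨UA, !![1, 0; 0, e], hU, ?_, ?_⟩
  · ext i j; fin_cases i <;> fin_cases j <;> simp [Matrix.mul_apply, Fin.sum_univ_two, hee]
  · funext ⟨a, b, c⟩
    fin_cases a <;> fin_cases b <;> fin_cases c <;>
      simp [actA, actBC, Fin.sum_univ_two, Wstate, hUA, hs, z0, z1, w0, w1, Matrix.one_apply] <;> field_simp

theorem LU_comp (UA D U V : Matrix (Fin 2) (Fin 2) ℂ) (Ψ : Q3 → ℂ) (v : Q3) :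
    actBC Uᴴ Vᴴ (actA UA (actBC D 1 Ψ)) v =
     ∑ w : Q3, UA v.1 w.1 * (Uᴴ * D) v.2.1 w.2.1 * Vᴴ v.2.2 w.2.2 * Ψ w := by
  simp [actBC, actA, Fintype.sum_prod_type, Fin.sum_univ_two, Matrix.mul_apply]
  ring

theorem act_inv (U V : Matrix (Fin 2) (Fin 2) ℂ) (hU : Uᴴ * U = 1) (hV : Vᴴ * V = 1) (Ψ : Q3 → ℂ) :
    actBC Uᴴ Vᴴ (actBC U V Ψ) = Ψ := by
  have comp : ∀ X Y : Matrix (Fin 2) (Fin 2) ℂ, actBC X Y (actBC U V Ψ) = actBC (X * U) (Y * V) Ψ := by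
    intro X Y
    funext v
    simp only [actBC, Fin.sum_univ_two, Matrix.mul_apply]
    ring
  rw [comp, hU, hV]
  funext ⟨a, b, c⟩
  simp [actBC, Matrix.one_apply]

theorem I5_W : I5 Wstate = 2 / 9 := by
  have hn : ‖((Real.sqrt 3 : ℝ) : ℂ)‖ ^ 2 = 3 := by simp
  rw [aligned_I5]
  · have e00 : pBC Wstate 0 0 = 1/3 := by simp [pBC, Wstate]
    have e01 : pBC Wstate 0 1 = 1/3 := by simp [pBC, Wstate]
    have e10 : pBC Wstate 1 0 = 1/3 := by simp [pBC, Wstate]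
    have e11 : pBC Wstate 1 1 = 0 := by simp [pBC, Wstate]
    rw [e00, e01, e10, e11]; norm_num
  all_goals simp [rB, rC, Wstate]

theorem I5_lower_bound
    (Ψ : Q3 → ℂ) (hΨ : ∑ v : Q3, ‖Ψ v‖ ^ 2 = 1) :
    2 / 9 ≤ I5 Ψ ∧ (I5 Ψ = 2 / 9 ↔ LUequiv Wstate Ψ) := by
  obtain ⟨U, hU, u01, u10, u⟩ := diag_exists _ (herm_rB Ψ)
  obtain ⟨V, hV, v01, v10, v⟩ := diag_exists _ (herm_rC Ψ)
  rw [← rB_act U V hV] at u01 u10 u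
  rw [← rC_act U V hU] at v01 v10 v
  have hn := norm_act U V hU hV Ψ hΨ
  have hinv := act_inv U V hU hV Ψ
  have hI := I5_actBC U V hU hV Ψ
  generalize actBC U V Ψ = Φ at *
  simp only [Matrix.of_apply] at u01 u10 u v01 v10 v
  rw [rB_diag, rB_diag, Complex.ofReal_re, Complex.ofReal_re] at u
  rw [rC_diag, rC_diag, Complex.ofReal_re, Complex.ofReal_re] at v
  rw [norm_sum] at hn
  obtain ⟨m1, m2⟩ := real_part _ _ _ _ (pBC_nonneg Φ 1 1) hn u v _ (aligned_I5 Φ u01 u10 v01 v10)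
  rw [hI] at m1 m2
  refine ⟨m1, fun h => ?_, ?_⟩
  · obtain ⟨q11, q00, q01, q10⟩ := m2 h
    obtain ⟨UA, D, hUA, hD, hΦ⟩ := aligned_eq Φ u01 v01 q00 q01 q10 q11
    have hUD : (Uᴴ * D)ᴴ * (Uᴴ * D) = 1 := by
      rw [Matrix.conjTranspose_mul, Matrix.conjTranspose_conjTranspose, Matrix.mul_assoc,
        ← Matrix.mul_assoc U, mul_eq_one_comm.mp hU, one_mul, hD]
    refine ⟨UA, Uᴴ * D, Vᴴ, mul_eq_one_comm.mp hUA, hUA, mul_eq_one_comm.mp hUD, hUD, by simpa using hV,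
      by simpa using mul_eq_one_comm.mp hV, fun w => ?_⟩
    rw [← hinv, hΦ, LU_comp]
  · rintro ⟨UA, UB, UC, -, hA, -, hB, -, hC, hw⟩
    have : Ψ = actA UA (actBC UB UC Wstate) := by
      funext w
      rw [hw]
      simp only [actBC, actA, Fintype.sum_prod_type, Fin.sum_univ_two]
      ring
    rw [this]
    have h1 : I5 (actA UA (actBC UB UC Wstate)) = I5 (actBC UB UC Wstate) := by
      unfold I5; rw [rho_actA UA hA]
    rw [h1, I5_actBC UB UC hB hC, I5_W]

end
end
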